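/- Let S ⊆ 2^[n] be a set system and let m ≥ 1 be an integer. Define the duplicated set system S' ⊆ 2^{[n]×[m]} by S' = { S × [m] : S ∈ S }, i.e., each set s ∈ S is expanded so that it contains the pair (i, j) for every i ∈ s and every j ∈ [m]. Then HHdim(S') = HHdim(S). -/

import Mathlib

/-- The support of a vector `v`: the set of its non-zero coordinates. -/
def vecSupp {α : Type*} (v : α → ℝ) : Set α := {i | v i ≠ 0}

/-- The set of heavy hitters of `v` induced by the set system `S`:
indices `i` such that some member `s ∈ S` satisfies `supp(v) ∩ s = {i}`. -/
def HHset {α : Type*} (S : Set (Set α)) (v : α → ℝ) : Set α :=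
  {i | ∃ s ∈ S, vecSupp v ∩ s = {i}}

/-- The heavy-hitter dimension of a set system: the supremum over vectors `v`
of the number of heavy hitters induced by `S`. -/
noncomputable def HHdim {α : Type*} (S : Set (Set α)) : ℕ :=
  sSup {k | ∃ v : α → ℝ, (HHset S v).ncard = k}

/-!
The sets of heavy hitters of `S` are exactly the sets `T` each of whose points is cut out of `T` by
a member of `S`, so `HHdim S` is the largest size of such a `T`. Duplication pulls `S` back along
the projection `f : [n] × [m] → [n]`. A set that cuts out a point of `T` upstairs contains the
whole fibre of `f` through that point, so `f` is injective on `T` and `T` can be replaced by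
`f '' T`; conversely, a set `T` downstairs lifts to any choice of one point in each fibre over it.
-/

/-- `S` isolates the points of `T` if every singleton contained in `T` is the trace on `T` of a
member of `S`. This describes sets of heavy hitters without reference to vectors. -/
def IsolatesPoints {α : Type*} (S : Set (Set α)) (T : Set α) : Prop :=
  ∀ i ∈ T, ∃ s ∈ S, T ∩ s = {i}

section HeavyHitters

variable {α : Type*} (S : Set (Set α))

lemma HHset_subset_vecSupp (v : α → ℝ) : HHset S v ⊆ vecSupp v := by
  rintro i ⟨s, -, hs⟩
  exact (hs.ge rfl).1

lemma isolatesPoints_HHset (v : α → ℝ) : IsolatesPoints S (HHset S v) := by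
  intro i hi
  have ⟨s, hsS, hs⟩ := hi
  refine ⟨s, hsS, Set.Subset.antisymm ?_ ?_⟩
  · exact (Set.inter_subset_inter_left s (HHset_subset_vecSupp S v)).trans hs.le
  · exact Set.singleton_subset_iff.2 ⟨hi, (hs.ge rfl).2⟩

lemma vecSupp_indicator_one (T : Set α) : vecSupp (T.indicator 1) = T :=
  Set.support_indicator.trans (by rw [Function.support_one, Set.inter_univ])

variable {S}

lemma IsolatesPoints.HHset_indicator_one {T : Set α} (hT : IsolatesPoints S T) :
    HHset S (T.indicator 1) = T := by
  apply Set.Subset.antisymm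
  · exact (HHset_subset_vecSupp S _).trans (vecSupp_indicator_one T).le
  · intro i hi
    obtain ⟨s, hsS, hs⟩ := hT i hi
    exact ⟨s, hsS, by rwa [vecSupp_indicator_one]⟩

variable (S)

lemma range_HHset : Set.range (HHset S) = {T | IsolatesPoints S T} := by
  apply Set.Subset.antisymm
  · rintro _ ⟨v, rfl⟩
    exact isolatesPoints_HHset S v
  · exact fun T hT ↦ ⟨T.indicator 1, hT.HHset_indicator_one⟩

lemma HHdim_eq_sSup_ncard_isolatesPoints :
    HHdim S = sSup (Set.ncard '' {T | IsolatesPoints S T}) := by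
  rw [← range_HHset, ← Set.range_comp]
  rfl

end HeavyHitters

section Preimage

variable {α β : Type*} {f : β → α} {S : Set (Set α)}

lemma IsolatesPoints.injOn_of_preimage {T : Set β}
    (hT : IsolatesPoints (Set.preimage f '' S) T) : Set.InjOn f T := by
  intro x hx y hy hxy
  obtain ⟨_, ⟨s, -, rfl⟩, hs⟩ := hT x hx
  have hxs : f x ∈ s := (hs.ge rfl).2
  have hys : f y ∈ s := hxy ▸ hxs
  exact (hs.le ⟨hy, hys⟩).symm

lemma IsolatesPoints.image_of_preimage {T : Set β}
    (hT : IsolatesPoints (Set.preimage f '' S) T) : IsolatesPoints S (f '' T) := by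
  rintro _ ⟨x, hx, rfl⟩
  obtain ⟨_, ⟨s, hsS, rfl⟩, hs⟩ := hT x hx
  exact ⟨s, hsS, by rw [← Set.image_inter_preimage, hs, Set.image_singleton]⟩

lemma IsolatesPoints.preimage_of_injOn {T : Set β} (hT : IsolatesPoints S (f '' T))
    (hf : Set.InjOn f T) : IsolatesPoints (Set.preimage f '' S) T := by
  intro x hx
  obtain ⟨s, hsS, hs⟩ := hT (f x) (Set.mem_image_of_mem f hx)
  refine ⟨f ⁻¹' s, Set.mem_image_of_mem _ hsS, ?_⟩
  rw [← hf.image_eq_image_iff Set.inter_subset_left (Set.singleton_subset_iff.2 hx),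
    Set.image_inter_preimage, hs, Set.image_singleton]

lemma ncard_image_isolatesPoints_preimage (hf : Function.Surjective f) (S : Set (Set α)) :
    Set.ncard '' {T | IsolatesPoints (Set.preimage f '' S) T} =
      Set.ncard '' {T | IsolatesPoints S T} := by
  apply Set.Subset.antisymm
  · rintro _ ⟨T, hT, rfl⟩
    exact ⟨f '' T, hT.image_of_preimage, hT.injOn_of_preimage.ncard_image⟩
  · rintro _ ⟨T, hT, rfl⟩
    obtain ⟨T', rfl, hfT'⟩ :=
      Set.exists_image_eq_injOn_of_subset_range (hf.range_eq ▸ T.subset_univ)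
    exact ⟨T', hT.preimage_of_injOn hfT', hfT'.ncard_image.symm⟩

/-- If the sizes of the sets of heavy hitters are unbounded, both sides are the junk value `0` of
`sSup`. -/
theorem HHdim_duplicate_eq_general (hf : Function.Surjective f) (S : Set (Set α)) :
    HHdim (Set.preimage f '' S) = HHdim S := by
  rw [HHdim_eq_sSup_ncard_isolatesPoints, ncard_image_isolatesPoints_preimage hf,
    ← HHdim_eq_sSup_ncard_isolatesPoints]

end Preimage

/-- Duplicating every coordinate `m ≥ 1` times (replacing each set
`s ∈ S` by `s × [m]` over the ground set `[n] × [m]`) does not change the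
heavy-hitter dimension. -/
theorem HHdim_duplicate_eq {n m : ℕ} (hm : 1 ≤ m) (S : Set (Set (Fin n))) :
    HHdim ((fun s : Set (Fin n) => s ×ˢ (Set.univ : Set (Fin m))) '' S) = HHdim S := by
  have : Nonempty (Fin m) := Fin.pos_iff_nonempty.1 hm
  simpa only [Set.prod_univ] using HHdim_duplicate_eq_general Prod.fst_surjective S
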